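/- Let X be a locally compact Polish space and let G be a group of homeomorphisms of X such that: (i) the set of composition operators {C_φ : φ ∈ G} is compact in the strong operator topology on bounded operators on C₀(X); and (ii) for every t ∈ X the orbit {φ(t) : φ ∈ G} is nowhere dense in X. Then for every C > 1 there exists a norm N on C₀(X) such that: N is a lattice norm (|x| ≤ |y| implies N(x) ≤ N(y)); ‖x‖_∞ ≤ N(x) ≤ C‖x‖_∞ for all x ∈ C₀(X); every composition operator C_φ with φ ∈ G satisfies N(C_φ x) = N(x) for all x; and conversely every lattice isomorphism T of C₀(X) satisfying N(T x) = N(x) for all x equals C_φ for some φ ∈ G. -/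

import Mathlib

open ZeroAtInfty Filter Topology Metric

noncomputable section

/-- Pointwise supremum of two continuous functions vanishing at infinity. -/
def c0sup {X : Type*} [TopologicalSpace X] (f g : C₀(X, ℝ)) : C₀(X, ℝ) where
  toFun := fun t => max (f t) (g t)
  continuous_toFun := (map_continuous f).max (map_continuous g)
  zero_at_infty' := by simpa using (zero_at_infty f).max (zero_at_infty g)

/-- Composition operator `f ↦ f ∘ φ` on `C₀(X)` induced by a homeomorphism `φ`. -/
def compOp {X : Type*} [TopologicalSpace X] (φ : X ≃ₜ X) (f : C₀(X, ℝ)) : C₀(X, ℝ) where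
  toFun := fun t => f (φ t)
  continuous_toFun := (map_continuous f).comp φ.continuous
  zero_at_infty' := (zero_at_infty f).comp φ.map_cocompact.le

/-!
Let `a` be distinct positive weights with `∑ a i = C < ∑ (a i) ^ 2` and `p` an injective dense
sequence in `X`. Put `q f = max ‖f‖ (∑ a i * |f (p i)|)` and let `N f` be the supremum of
`q (f ∘ φ)` over `φ ∈ G`; this is a `G`-invariant lattice norm with `‖f‖ ≤ N f ≤ C * ‖f‖`.

A lattice isomorphism has the form `T f = w * (f ∘ σ)` with `w > 0`. By Baire, the points outside
the closures of the orbits of all `p i` are dense; at such a point `s` there is a bump `x` with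
`x s = 1` and `N x ≤ 1`, so that `N`-isometry of `T` forces `w = 1`.

It remains to see that `σ ∈ G`. If `0 ≤ f`, `‖f‖ ≤ C` and `a i ≤ f (σ (p i))` for all `i`, then
`∑ (a i) ^ 2 ≤ N (f ∘ σ) = N f`. As these `f` are directed downwards, compactness gives one `ψ ∈ G`
with `∑ (a i) ^ 2 ≤ q (f ∘ ψ)` for all of them, and `‖f‖ ≤ C < ∑ (a i) ^ 2` excludes the first term
of the maximum. Letting `f` decrease to the function `h` which is `a i` at `σ (p i)` and `0`
elsewhere gives `∑ (a i) ^ 2 ≤ ∑ a i * h (ψ (p i))`. The right-hand sequence `h (ψ (p i))` has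
`ℓ²`-norm at most that of `a`, so it equals `a`; since the weights are distinct and positive,
`ψ (p i) = σ (p i)` for all `i`, whence `ψ = σ`.
-/

section Sequences

lemma exists_weights {C : ℝ} (hC : 1 < C) :
    ∃ a : ℕ → ℝ, (∀ j, 0 < a j) ∧ Function.Injective a ∧ HasSum a C ∧
      Summable (fun j ↦ a j ^ 2) ∧ C < ∑' j, a j ^ 2 := by
  have hC0 : 0 < C := zero_lt_one.trans hC
  have hsqrt : 1 < √C := Real.lt_sqrt_of_sq_lt (by simpa using hC)
  have hinv : (√C)⁻¹ < 1 := inv_lt_one_of_one_lt₀ hsqrt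
  have hinv0 : 0 < (√C)⁻¹ := by positivity
  -- With this ratio `∑ √C * r ^ j = C`, while the first term of `∑ (√C * r ^ j) ^ 2` is `C`.
  set r : ℝ := 1 - (√C)⁻¹ with hr
  have hr0 : 0 < r := by linarith
  have hr1 : r < 1 := by linarith
  let a : ℕ → ℝ := fun j ↦ √C * r ^ j
  have hpos : ∀ j, 0 < a j := fun j ↦ by positivity
  have hsq : ∀ j, a j ^ 2 = C * (r ^ 2) ^ j := fun j ↦ by
    rw [mul_pow, Real.sq_sqrt hC0.le, pow_right_comm]
  have hsum : HasSum a C := by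
    have hC_eq : √C * (1 - r)⁻¹ = C := by
      rw [hr, sub_sub_cancel, inv_inv, Real.mul_self_sqrt hC0.le]
    simpa only [hC_eq] using (hasSum_geometric_of_lt_one hr0.le hr1).mul_left (√C)
  have hsum_sq : Summable fun j ↦ a j ^ 2 := by
    simp only [hsq]
    exact (summable_geometric_of_lt_one (sq_nonneg r) (by nlinarith)).mul_left C
  refine ⟨a, hpos, fun i j hij ↦ ?_, hsum, hsum_sq, ?_⟩
  · exact pow_right_injective₀ hr0 hr1.ne (mul_left_cancel₀ (by positivity) hij)
  · calc C < C + a 1 ^ 2 := lt_add_of_pos_right _ (pow_pos (hpos 1) 2)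
      _ = ∑ j ∈ {0, 1}, a j ^ 2 := by simp [hsq]
      _ ≤ ∑' j, a j ^ 2 := hsum_sq.sum_le_tsum _ fun j _ ↦ sq_nonneg _

lemma infinite_of_isNowhereDense {X : Type*} [TopologicalSpace X] [T1Space X] {s : Set X}
    (hs : IsNowhereDense s) (hne : s.Nonempty) : Infinite X := by
  by_contra hfin
  rw [not_infinite_iff_finite] at hfin
  rw [IsNowhereDense, (isOpen_discrete _).interior_eq] at hs
  exact hne.closure.ne_empty hs

lemma exists_injective_denseRange (X : Type*) [TopologicalSpace X] [T1Space X]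
    [TopologicalSpace.SeparableSpace X] [Infinite X] :
    ∃ p : ℕ → X, Function.Injective p ∧ DenseRange p := by
  obtain ⟨D, hD, hdense⟩ := TopologicalSpace.exists_countable_dense X
  have hinf : D.Infinite := fun hfin ↦ Set.infinite_univ (α := X) <| by
    rwa [← hdense.closure_eq, hfin.isClosed.closure_eq]
  have := hD.to_subtype
  have := hinf.to_subtype
  obtain ⟨e⟩ := nonempty_equiv_of_countable (α := ℕ) (β := D)
  exact ⟨fun n ↦ e n, Subtype.val_injective.comp e.injective,
    hdense.denseRange_val.comp e.surjective.denseRange continuous_subtype_val⟩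

lemma eq_of_tsum_sq_le_tsum_mul {ι : Type*} {a u : ι → ℝ} (ha : Summable fun i ↦ a i ^ 2)
    (hu : Summable fun i ↦ u i ^ 2) (hau : Summable fun i ↦ a i * u i)
    (hle : ∑' i, u i ^ 2 ≤ ∑' i, a i ^ 2)
    (hinner : ∑' i, a i ^ 2 ≤ ∑' i, a i * u i) : u = a := by
  have hsum : HasSum (fun i ↦ (u i - a i) ^ 2)
      (∑' i, u i ^ 2 - 2 * ∑' i, a i * u i + ∑' i, a i ^ 2) := by
    have hsq : ∀ i, (u i - a i) ^ 2 = u i ^ 2 - 2 * (a i * u i) + a i ^ 2 := fun i ↦ by ring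
    simpa only [hsq] using (hu.hasSum.sub (hau.hasSum.mul_left 2)).add ha.hasSum
  have hnonneg : ∀ i, 0 ≤ (u i - a i) ^ 2 := fun i ↦ sq_nonneg _
  rw [le_antisymm (by linarith) (hsum.nonneg hnonneg)] at hsum
  funext i
  exact sub_eq_zero.1 (sq_eq_zero_iff.1 (congrFun ((hasSum_zero_iff_of_nonneg hnonneg).1 hsum) i))

end Sequences

section ExtendZero

variable {X ι : Type*} {a : ι → ℝ} {q : ι → X}

lemma extend_zero_mem_Icc (ha0 : ∀ i, 0 ≤ a i) {c : ℝ} (ha : HasSum a c)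
    (hq : Function.Injective q) (x : X) : Function.extend q a 0 x ∈ Set.Icc 0 c := by
  by_cases hx : ∃ i, q i = x
  · obtain ⟨i, rfl⟩ := hx
    rw [hq.extend_apply]
    exact ⟨ha0 i, le_hasSum ha i fun j _ ↦ ha0 j⟩
  · rw [Function.extend_apply' _ _ _ hx]
    exact ⟨le_rfl, ha.nonneg ha0⟩

lemma summable_mul_extend_zero (ha0 : ∀ i, 0 ≤ a i) (ha : Summable a)
    (hq : Function.Injective q) (p : ι → X) :
    Summable fun i ↦ a i * Function.extend q a 0 (p i) := by
  have hmem := extend_zero_mem_Icc ha0 ha.hasSum hq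
  exact (ha.mul_right _).of_nonneg_of_le (fun i ↦ mul_nonneg (ha0 i) (hmem _).1)
    fun i ↦ mul_le_mul_of_nonneg_left (hmem _).2 (ha0 i)

lemma eq_of_extend_zero_apply_eq (ha_inj : Function.Injective a) (hq : Function.Injective q)
    {i : ι} (hi : a i ≠ 0) {x : X} (hx : Function.extend q a 0 x = a i) : x = q i := by
  by_cases hxq : ∃ j, q j = x
  · obtain ⟨j, rfl⟩ := hxq
    rw [hq.extend_apply] at hx
    rw [ha_inj hx]
  · rw [Function.extend_apply' _ _ _ hxq] at hx
    exact absurd hx.symm hi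

lemma extend_zero_apply_eq_of_tsum_sq_le_tsum_mul (ha0 : ∀ i, 0 ≤ a i) (ha : Summable a)
    (ha_sq : Summable fun i ↦ a i ^ 2) (hq : Function.Injective q) {p : ι → X}
    (hp : Function.Injective p)
    (hinner : ∑' i, a i ^ 2 ≤ ∑' i, a i * Function.extend q a 0 (p i)) (i : ι) :
    Function.extend q a 0 (p i) = a i := by
  have hsq : (fun x ↦ Function.extend q a 0 x ^ 2) = Function.extend q (fun i ↦ a i ^ 2) 0 := by
    funext x
    have hzero : (fun r : ℝ ↦ r ^ 2) ∘ (0 : X → ℝ) = 0 := funext fun _ ↦ zero_pow two_ne_zero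
    rw [Function.apply_extend (fun r : ℝ ↦ r ^ 2), hzero, Function.comp_def]
  have hsum : HasSum (fun x ↦ Function.extend q a 0 x ^ 2) (∑' i, a i ^ 2) :=
    hsq ▸ (hasSum_extend_zero hq).2 ha_sq.hasSum
  refine congrFun (eq_of_tsum_sq_le_tsum_mul ha_sq (hsum.summable.comp_injective hp)
    (summable_mul_extend_zero ha0 ha hq p) ?_ hinner) i
  exact (tsum_comp_le_tsum_of_inj hsum.summable (fun x ↦ sq_nonneg _) hp).trans_eq hsum.tsum_eq

end ExtendZero

section EvaluationAndLattice

variable {X : Type*} [TopologicalSpace X]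

@[simp]
lemma c0sup_apply (f g : C₀(X, ℝ)) (t : X) : c0sup f g t = max (f t) (g t) := rfl

@[simp]
lemma compOp_apply (φ : X ≃ₜ X) (f : C₀(X, ℝ)) (t : X) : compOp φ f t = f (φ t) := rfl

/-- Pointwise infimum of two continuous functions vanishing at infinity, the companion of
`c0sup`. -/
def c0inf (f g : C₀(X, ℝ)) : C₀(X, ℝ) := -c0sup (-f) (-g)

@[simp]
lemma c0inf_apply (f g : C₀(X, ℝ)) (t : X) : c0inf f g t = min (f t) (g t) := by
  simp [c0inf, max_neg_neg]

lemma c0sup_neg_self_apply (f : C₀(X, ℝ)) (t : X) : c0sup f (-f) t = |f t| := rfl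

lemma abs_apply_le_norm (f : C₀(X, ℝ)) (t : X) : |f t| ≤ ‖f‖ :=
  f.toBCF.norm_coe_le_norm t

lemma norm_le_of_forall_abs_le {f : C₀(X, ℝ)} {c : ℝ} (hc : 0 ≤ c) (h : ∀ t, |f t| ≤ c) :
    ‖f‖ ≤ c :=
  (f.toBCF.norm_le hc).2 h

lemma norm_compOp (φ : X ≃ₜ X) (f : C₀(X, ℝ)) : ‖compOp φ f‖ = ‖f‖ := by
  refine le_antisymm
    (norm_le_of_forall_abs_le (norm_nonneg _) fun t ↦ abs_apply_le_norm f (φ t))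
    (norm_le_of_forall_abs_le (norm_nonneg _) fun t ↦ ?_)
  simpa using abs_apply_le_norm (compOp φ f) (φ.symm t)

/-- Evaluation at a point, as a continuous linear functional on `C₀(X)`. -/
def evalC0 (t : X) : C₀(X, ℝ) →L[ℝ] ℝ :=
  LinearMap.mkContinuous ⟨⟨fun f ↦ f t, fun _ _ ↦ rfl⟩, fun _ _ ↦ rfl⟩ 1
    fun f ↦ by simpa using! abs_apply_le_norm f t

@[simp]
lemma evalC0_apply (t : X) (f : C₀(X, ℝ)) : evalC0 t f = f t := rfl

lemma isCompact_setOf_le_abs_apply (f : C₀(X, ℝ)) {ε : ℝ} (hε : 0 < ε) :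
    IsCompact {t | ε ≤ |f t|} := by
  have hsmall : {t | |f t| < ε} ∈ cocompact X := by
    simpa using! (zero_at_infty f).eventually (Metric.ball_mem_nhds 0 hε)
  obtain ⟨K, hK, hKs⟩ := mem_cocompact.1 hsmall
  refine hK.of_isClosed_subset (isClosed_le continuous_const (map_continuous f).abs) ?_
  intro t (ht : ε ≤ |f t|)
  by_contra htK
  exact ht.not_gt (hKs htK)

variable [T2Space X] [LocallyCompactSpace X]

lemma exists_apply_eq_one_of_notMem {s : X} {F : Set X} (hF : IsClosed F) (hs : s ∉ F) :
    ∃ f : C₀(X, ℝ), f s = 1 ∧ (∀ t ∈ F, f t = 0) ∧ ∀ t, f t ∈ Set.Icc 0 1 := by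
  obtain ⟨f, hone, hzero, hcpt, hIcc⟩ := exists_continuous_one_zero_of_isCompact
    (isCompact_singleton (x := s)) hF (Set.disjoint_singleton_left.2 hs)
  exact ⟨⟨f, hcpt.is_zero_at_infty⟩, hone rfl, fun t ht ↦ hzero ht, hIcc⟩

lemma exists_apply_eq_one (s : X) : ∃ f : C₀(X, ℝ), f s = 1 ∧ ∀ t, f t ∈ Set.Icc 0 1 := by
  obtain ⟨f, hone, -, hIcc⟩ := exists_apply_eq_one_of_notMem isClosed_empty (Set.notMem_empty s)
  exact ⟨f, hone, hIcc⟩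

lemma eq_of_forall_apply_ne_zero {s t : X} (h : ∀ f : C₀(X, ℝ), f s ≠ 0 → f t ≠ 0) : s = t := by
  by_contra hne
  obtain ⟨f, hone, hzero, -⟩ := exists_apply_eq_one_of_notMem isClosed_singleton hne
  exact h f (by simp [hone]) (hzero t rfl)

end EvaluationAndLattice

section SolidSubspaces

variable {X : Type*} [TopologicalSpace X] {I : Submodule ℝ C₀(X, ℝ)}

lemma exists_mem_forall_le_of_isCompact
    (hsolid : ∀ f ∈ I, ∀ g : C₀(X, ℝ), (∀ t, |g t| ≤ |f t|) → g ∈ I)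
    (hzero : ∀ s, ∃ f ∈ I, f s ≠ 0) {K : Set X} (hK : IsCompact K) (M : ℝ) :
    ∃ g ∈ I, (∀ t, 0 ≤ g t) ∧ ∀ t ∈ K, M ≤ g t := by
  refine hK.induction_on (p := fun K ↦ ∃ g ∈ I, (∀ t, 0 ≤ g t) ∧ ∀ t ∈ K, M ≤ g t)
    ⟨0, I.zero_mem, by simp⟩ ?mono ?union ?nhds
  case mono =>
    rintro s t hst ⟨g, hgI, hg0, hgt⟩
    exact ⟨g, hgI, hg0, fun x hx ↦ hgt x (hst hx)⟩
  case union =>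
    rintro s t ⟨g, hgI, hg0, hgs⟩ ⟨h, hhI, hh0, hht⟩
    refine ⟨g + h, I.add_mem hgI hhI, fun x ↦ add_nonneg (hg0 x) (hh0 x), ?_⟩
    rintro x (hxs | hxt)
    · exact (hgs x hxs).trans (le_add_of_nonneg_right (hh0 x))
    · exact (hht x hxt).trans (le_add_of_nonneg_left (hg0 x))
  case nhds =>
    intro s _
    obtain ⟨f, hfI, hfs⟩ := hzero s
    let h : C₀(X, ℝ) := ((M + 1) / f s) • f
    let g : C₀(X, ℝ) := c0sup h (-h)
    have hgs : M < g s := by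
      have : h s = M + 1 := div_mul_cancel₀ (M + 1) hfs
      rw [c0sup_neg_self_apply, this]
      exact (lt_add_one M).trans_le (le_abs_self _)
    refine ⟨{t | M < g t}, mem_nhdsWithin_of_mem_nhds <|
      (isOpen_lt continuous_const (map_continuous g)).mem_nhds hgs, g, ?_,
      fun t ↦ abs_nonneg (h t), fun t ht ↦ le_of_lt ht⟩
    exact hsolid h (I.smul_mem _ hfI) g fun t ↦ (abs_abs (h t)).le

theorem eq_top_of_isClosed_of_solid (hclosed : IsClosed (I : Set C₀(X, ℝ)))
    (hsolid : ∀ f ∈ I, ∀ g : C₀(X, ℝ), (∀ t, |g t| ≤ |f t|) → g ∈ I)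
    (hzero : ∀ s, ∃ f ∈ I, f s ≠ 0) : I = ⊤ := by
  refine eq_top_iff.2 fun f _ ↦ ?_
  refine hclosed.closure_subset (Metric.mem_closure_iff.2 fun ε hε ↦ ?_)
  obtain ⟨g, hgI, hg0, hfg⟩ := exists_mem_forall_le_of_isCompact hsolid hzero
    (isCompact_setOf_le_abs_apply f (half_pos hε)) ‖f‖
  let h : C₀(X, ℝ) := c0sup (c0inf f g) (-g)
  have hh : ∀ t, h t = max (min (f t) (g t)) (-g t) := fun t ↦ by simp [h]
  refine ⟨h, hsolid g hgI h fun t ↦ ?_, ?_⟩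
  · have := hg0 t
    rw [hh, abs_of_nonneg this, abs_le]
    exact ⟨le_max_right _ _, max_le (min_le_right _ _) (by linarith)⟩
  · rw [dist_eq_norm]
    refine (norm_le_of_forall_abs_le (half_pos hε).le fun t ↦ ?_).trans_lt (half_lt_self hε)
    rw [ZeroAtInftyContinuousMap.sub_apply, hh]
    rcases le_or_gt (ε / 2) |f t| with ht | ht
    · have hle : |f t| ≤ g t := (abs_apply_le_norm f t).trans (hfg t ht)
      rw [min_eq_left (abs_le.1 hle).2, max_eq_left (abs_le.1 hle).1, sub_self, abs_zero]
      exact (half_pos hε).le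
    · have := hg0 t
      rw [abs_lt] at ht
      grind

end SolidSubspaces

section LatticeHomomorphisms

variable {X : Type*} [TopologicalSpace X]

lemma symm_map_c0sup {T : C₀(X, ℝ) ≃L[ℝ] C₀(X, ℝ)}
    (hT : ∀ f g : C₀(X, ℝ), T (c0sup f g) = c0sup (T f) (T g)) (f g : C₀(X, ℝ)) :
    T.symm (c0sup f g) = c0sup (T.symm f) (T.symm g) :=
  T.injective (by simp [hT])

variable [T2Space X] [LocallyCompactSpace X]

theorem exists_pos_mul_apply_of_map_c0sup {L : C₀(X, ℝ) →L[ℝ] ℝ}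
    (hL : ∀ f g, L (c0sup f g) = max (L f) (L g)) (hne : L ≠ 0) :
    ∃ s : X, ∃ w : ℝ, 0 < w ∧ ∀ f, L f = w * f s := by
  have hmono : ∀ f g : C₀(X, ℝ), (∀ t, f t ≤ g t) → L f ≤ L g := fun f g h ↦ by
    have : c0sup f g = g := by ext t; simpa using h t
    rw [← this, hL]
    exact le_max_left _ _
  have habs : ∀ f, L (c0sup f (-f)) = |L f| := fun f ↦ by rw [hL, map_neg]; rfl
  have hker : L.ker ≠ ⊤ := fun h ↦
    hne (ContinuousLinearMap.coe_injective (LinearMap.ker_eq_top.1 h))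
  obtain ⟨s, hs⟩ : ∃ s, ∀ f, L f = 0 → f s = 0 := by
    by_contra! hcon
    refine hker (eq_top_of_isClosed_of_solid L.isClosed_ker (fun f hf g hgf ↦ ?_) hcon)
    have hle : |L g| ≤ |L f| := by
      rw [← habs, ← habs]
      exact hmono _ _ hgf
    rw [LinearMap.mem_ker] at hf ⊢
    exact abs_nonpos_iff.1 (hle.trans_eq (abs_eq_zero.2 hf))
  obtain ⟨b, hbs, hb⟩ := exists_apply_eq_one s
  have hb_nonneg : 0 ≤ L b := by simpa using hmono 0 b fun t ↦ (hb t).1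
  refine ⟨s, L b, hb_nonneg.lt_of_ne' fun h ↦ ?_, fun f ↦ ?_⟩
  · exact one_ne_zero (hbs.symm.trans (hs b h))
  · have : L f * b s - L b * f s = 0 := hs (L f • b - L b • f) (by simp [mul_comm])
    rw [hbs] at this
    linarith

lemma continuous_of_apply_eq_mul_apply {T : C₀(X, ℝ) → C₀(X, ℝ)} {w : X → ℝ} {σ : X → X}
    (hw : ∀ t, w t ≠ 0) (hT : ∀ f t, T f t = w t * f (σ t)) : Continuous σ := by
  refine continuous_iff_continuousAt.2 fun t U hU ↦ ?_
  obtain ⟨V, hVU, hV, htV⟩ := mem_nhds_iff.1 hU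
  obtain ⟨b, hone, hzero, -⟩ :=
    exists_apply_eq_one_of_notMem hV.isClosed_compl (Set.notMem_compl_iff.2 htV)
  have hne : T b t ≠ 0 := by simpa [hT, hone] using hw t
  rw [mem_map]
  filter_upwards [(map_continuous (T b)).continuousAt.eventually_ne hne] with t' ht'
  refine hVU (Set.notMem_compl_iff.1 fun hmem ↦ ht' ?_)
  rw [hT, hzero _ hmem, mul_zero]

variable {T : C₀(X, ℝ) ≃L[ℝ] C₀(X, ℝ)}

lemma exists_continuous_apply_eq_mul_apply
    (hT : ∀ f g : C₀(X, ℝ), T (c0sup f g) = c0sup (T f) (T g)) :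
    ∃ (σ : X → X) (w : X → ℝ), Continuous σ ∧ (∀ t, 0 < w t) ∧ ∀ f t, T f t = w t * f (σ t) := by
  have hpoint : ∀ t, ∃ s, ∃ w : ℝ, 0 < w ∧ ∀ f, T f t = w * f s := fun t ↦ by
    refine exists_pos_mul_apply_of_map_c0sup (L := (evalC0 t).comp (T : C₀(X, ℝ) →L[ℝ] C₀(X, ℝ)))
      (fun f g ↦ by simp [hT]) fun hzero ↦ ?_
    obtain ⟨b, hb, -⟩ := exists_apply_eq_one t
    have : b t = 0 := by simpa using DFunLike.congr_fun hzero (T.symm b)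
    exact one_ne_zero (hb.symm.trans this)
  choose σ w hw hTσ using hpoint
  exact ⟨σ, w, continuous_of_apply_eq_mul_apply (fun t ↦ (hw t).ne') fun f t ↦ hTσ t f, hw,
    fun f t ↦ hTσ t f⟩

theorem exists_homeomorph_apply_eq_mul_apply
    (hT : ∀ f g : C₀(X, ℝ), T (c0sup f g) = c0sup (T f) (T g)) :
    ∃ (σ : X ≃ₜ X) (w v : X → ℝ),
      ((∀ t, 0 < w t) ∧ ∀ f t, T f t = w t * f (σ t)) ∧
      ((∀ t, 0 < v t) ∧ ∀ f t, T.symm f t = v t * f (σ.symm t)) := by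
  obtain ⟨σ, w, hσ, hw, hTσ⟩ := exists_continuous_apply_eq_mul_apply hT
  obtain ⟨τ, v, hτ, hv, hTτ⟩ := exists_continuous_apply_eq_mul_apply (symm_map_c0sup hT)
  have hleft : ∀ t, τ (σ t) = t := fun t ↦ (eq_of_forall_apply_ne_zero fun f hf h ↦ hf <| by
    rw [← T.apply_symm_apply f, hTσ, hTτ, h, mul_zero, mul_zero]).symm
  have hright : ∀ t, σ (τ t) = t := fun t ↦ (eq_of_forall_apply_ne_zero fun f hf h ↦ hf <| by
    rw [← T.symm_apply_apply f, hTτ, hTσ, h, mul_zero, mul_zero]).symm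
  exact ⟨⟨⟨σ, τ, hleft, hright⟩, hσ, hτ⟩, w, v, ⟨hw, hTσ⟩, hv, hTτ⟩

end LatticeHomomorphisms

section PeakedIsometries

variable {X : Type*} [TopologicalSpace X] {N : C₀(X, ℝ) → ℝ}

lemma abs_apply_le_of_isometry (hN : ∀ x, ‖x‖ ≤ N x)
    (hpeak : Dense {s | ∃ x : C₀(X, ℝ), x s = 1 ∧ N x ≤ 1}) {S : C₀(X, ℝ) → C₀(X, ℝ)}
    (hS : ∀ x, N (S x) = N x) {σ : X ≃ₜ X} {w : X → ℝ} (hw : ∀ t, 0 < w t)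
    (hSσ : ∀ f t, S f t = w t * f (σ t)) (f : C₀(X, ℝ)) (t : X) : |S f t| ≤ |f (σ t)| := by
  have hclosed : IsClosed {t | |S f t| ≤ |f (σ t)|} :=
    isClosed_le (map_continuous _).abs ((map_continuous f).comp σ.continuous).abs
  refine closure_minimal ?_ hclosed ((hpeak.preimage σ.isOpenMap) t)
  rintro t ⟨x, hx, hNx⟩
  have hwt : w t ≤ 1 := calc
    w t = S x t := by rw [hSσ, hx, mul_one]
    _ ≤ ‖S x‖ := (le_abs_self _).trans (abs_apply_le_norm _ t)
    _ ≤ N (S x) := hN _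
    _ ≤ 1 := (hS x).trans_le hNx
  change |S f t| ≤ |f (σ t)|
  rw [hSσ, abs_mul, abs_of_pos (hw t)]
  exact mul_le_of_le_one_left (abs_nonneg _) hwt

theorem exists_eq_compOp_of_isometry [T2Space X] [LocallyCompactSpace X]
    (hN : ∀ x, ‖x‖ ≤ N x) (hpeak : Dense {s | ∃ x : C₀(X, ℝ), x s = 1 ∧ N x ≤ 1})
    {T : C₀(X, ℝ) ≃L[ℝ] C₀(X, ℝ)} (hT : ∀ f g : C₀(X, ℝ), T (c0sup f g) = c0sup (T f) (T g))
    (hTN : ∀ x, N (T x) = N x) : ∃ σ : X ≃ₜ X, ∀ f, T f = compOp σ f := by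
  obtain ⟨σ, w, v, ⟨hw, hTσ⟩, hv, hTσ_symm⟩ := exists_homeomorph_apply_eq_mul_apply hT
  have hTN_symm : ∀ x, N (T.symm x) = N x := fun x ↦ by rw [← hTN, T.apply_symm_apply]
  refine ⟨σ, fun f ↦ ?_⟩
  ext t
  have habs : |T f t| = |f (σ t)| := by
    refine le_antisymm (abs_apply_le_of_isometry hN hpeak hTN hw hTσ f t) ?_
    simpa using abs_apply_le_of_isometry hN hpeak hTN_symm hv hTσ_symm (T f) (σ t)
  rw [hTσ, abs_mul, abs_of_pos (hw t)] at habs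
  rw [compOp_apply, hTσ]
  rcases eq_or_ne (f (σ t)) 0 with h | h
  · rw [h, mul_zero]
  · rw [(mul_eq_right₀ (abs_ne_zero.2 h)).1 habs, one_mul]

end PeakedIsometries

section OrbitSupremum

variable {X : Type*} [TopologicalSpace X]

/-- A seminorm on `C₀(X)` is a lattice seminorm if it is monotone in the absolute value. -/
def IsLatticeSeminorm (q : Seminorm ℝ C₀(X, ℝ)) : Prop :=
  ∀ ⦃x y : C₀(X, ℝ)⦄, (∀ t, |x t| ≤ |y t|) → q x ≤ q y

lemma isLatticeSeminorm_normSeminorm : IsLatticeSeminorm (normSeminorm ℝ C₀(X, ℝ)) :=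
  fun _ y hxy ↦ norm_le_of_forall_abs_le (norm_nonneg y)
    fun t ↦ (hxy t).trans (abs_apply_le_norm y t)

lemma IsLatticeSeminorm.sup {p q : Seminorm ℝ C₀(X, ℝ)} (hp : IsLatticeSeminorm p)
    (hq : IsLatticeSeminorm q) : IsLatticeSeminorm (p ⊔ q) :=
  fun _ _ hxy ↦ max_le_max (hp hxy) (hq hxy)

/-- The composition operator `compOp φ` as a linear map, so that seminorms can be pulled back
along it. -/
def compOpLinearMap (φ : X ≃ₜ X) : C₀(X, ℝ) →ₗ[ℝ] C₀(X, ℝ) where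
  toFun := compOp φ
  map_add' _ _ := rfl
  map_smul' _ _ := rfl

/-- The supremum of a seminorm over the `G`-orbits in `C₀(X)`, used to turn `q` into a
`G`-invariant seminorm. It is only meaningful for `q` dominated by a multiple of the norm: the
supremum of an unbounded family of seminorms is the junk value `0`. -/
def orbitSup (G : Set (X ≃ₜ X)) (q : Seminorm ℝ C₀(X, ℝ)) : Seminorm ℝ C₀(X, ℝ) :=
  ⨆ φ : G, q.comp (compOpLinearMap φ)

variable {G : Set (X ≃ₜ X)} {q : Seminorm ℝ C₀(X, ℝ)} {C : ℝ} (hq : ∀ x, q x ≤ C * ‖x‖)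
include hq

lemma bddAbove_range_compOp (x : C₀(X, ℝ)) :
    BddAbove (Set.range fun φ : G ↦ q (compOp (φ : X ≃ₜ X) x)) := by
  refine ⟨C * ‖x‖, ?_⟩
  rintro _ ⟨φ, rfl⟩
  exact (hq _).trans_eq (by rw [norm_compOp])

lemma orbitSup_apply (x : C₀(X, ℝ)) :
    orbitSup G q x = ⨆ φ : G, q (compOp (φ : X ≃ₜ X) x) :=
  Seminorm.iSup_apply (Seminorm.bddAbove_range_iff.2 (bddAbove_range_compOp hq))

lemma apply_compOp_le_orbitSup {φ : X ≃ₜ X} (hφ : φ ∈ G) (x : C₀(X, ℝ)) :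
    q (compOp φ x) ≤ orbitSup G q x := by
  rw [orbitSup_apply hq]
  exact le_ciSup (bddAbove_range_compOp hq x) ⟨φ, hφ⟩

lemma le_orbitSup (h_id : Homeomorph.refl X ∈ G) (x : C₀(X, ℝ)) : q x ≤ orbitSup G q x :=
  apply_compOp_le_orbitSup hq h_id x

lemma orbitSup_le (hG : G.Nonempty) {x : C₀(X, ℝ)} {c : ℝ} (h : ∀ φ ∈ G, q (compOp φ x) ≤ c) :
    orbitSup G q x ≤ c := by
  have := hG.to_subtype
  rw [orbitSup_apply hq]
  exact ciSup_le fun φ ↦ h φ φ.2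

lemma orbitSup_le_mul_norm (hG : G.Nonempty) (x : C₀(X, ℝ)) : orbitSup G q x ≤ C * ‖x‖ :=
  orbitSup_le hq hG fun φ _ ↦ (hq _).trans_eq (by rw [norm_compOp])

lemma IsLatticeSeminorm.orbitSup (hG : G.Nonempty) (hlat : IsLatticeSeminorm q) :
    IsLatticeSeminorm (orbitSup G q) :=
  fun _ y hxy ↦ orbitSup_le hq hG fun φ hφ ↦
    (hlat fun t ↦ hxy (φ t)).trans (apply_compOp_le_orbitSup hq hφ y)

lemma orbitSup_compOp_le (h_comp : ∀ φ ∈ G, ∀ ψ ∈ G, φ.trans ψ ∈ G) {φ : X ≃ₜ X} (hφ : φ ∈ G)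
    (x : C₀(X, ℝ)) : orbitSup G q (compOp φ x) ≤ orbitSup G q x :=
  orbitSup_le hq ⟨φ, hφ⟩ fun ψ hψ ↦ apply_compOp_le_orbitSup hq (h_comp ψ hψ φ hφ) x

lemma orbitSup_compOp (h_comp : ∀ φ ∈ G, ∀ ψ ∈ G, φ.trans ψ ∈ G)
    (h_inv : ∀ φ ∈ G, φ.symm ∈ G) {φ : X ≃ₜ X} (hφ : φ ∈ G) (x : C₀(X, ℝ)) :
    orbitSup G q (compOp φ x) = orbitSup G q x := by
  refine le_antisymm (orbitSup_compOp_le hq h_comp hφ x) ?_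
  have hx : compOp φ.symm (compOp φ x) = x := by ext t; simp
  simpa only [hx] using orbitSup_compOp_le hq h_comp (h_inv φ hφ) (compOp φ x)

lemma continuous_seminorm_eval (x : C₀(X, ℝ)) :
    Continuous fun R : C₀(X, ℝ) → C₀(X, ℝ) ↦ q (R x) := by
  have hzero : ContinuousAt q 0 := by
    rw [ContinuousAt, map_zero]
    exact squeeze_zero (fun x ↦ apply_nonneg q x) hq
      (by simpa using tendsto_norm_zero.const_mul C)
  exact (Seminorm.continuous_of_continuousAt_zero hzero).comp (continuous_apply x)

variable (h_cpt : IsCompact ((fun φ : X ≃ₜ X ↦ (compOp φ : C₀(X, ℝ) → C₀(X, ℝ))) '' G))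
include h_cpt

lemma exists_orbitSup_le_apply_compOp (hG : G.Nonempty) (x : C₀(X, ℝ)) :
    ∃ φ ∈ G, orbitSup G q x ≤ q (compOp φ x) := by
  obtain ⟨_, ⟨φ, hφ, rfl⟩, hmax⟩ :=
    h_cpt.exists_isMaxOn (hG.image _) (continuous_seminorm_eval hq x).continuousOn
  exact ⟨φ, hφ, orbitSup_le hq hG fun ψ hψ ↦ hmax ⟨ψ, hψ, rfl⟩⟩

theorem exists_forall_le_apply_compOp (hlat : IsLatticeSeminorm q) (hG : G.Nonempty)
    {A : Set C₀(X, ℝ)} (hne : A.Nonempty) (hnonneg : ∀ f ∈ A, ∀ t, 0 ≤ f t)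
    (hinf : ∀ f ∈ A, ∀ g ∈ A, c0inf f g ∈ A) {S : ℝ} (hS : ∀ f ∈ A, S ≤ orbitSup G q f) :
    ∃ ψ ∈ G, ∀ f ∈ A, S ≤ q (compOp ψ f) := by
  let K : A → Set (C₀(X, ℝ) → C₀(X, ℝ)) := fun f ↦
    (fun φ : X ≃ₜ X ↦ (compOp φ : C₀(X, ℝ) → C₀(X, ℝ))) '' G ∩ {R | S ≤ q (R f)}
  have hclosed : ∀ f : A, IsClosed {R : C₀(X, ℝ) → C₀(X, ℝ) | S ≤ q (R f)} := fun f ↦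
    isClosed_le continuous_const (continuous_seminorm_eval hq f)
  have hmono : ∀ f g : A, (∀ t, (f : C₀(X, ℝ)) t ≤ (g : C₀(X, ℝ)) t) → K f ⊆ K g := by
    rintro f g hfg _ ⟨⟨φ, hφ, rfl⟩, hle⟩
    refine ⟨⟨φ, hφ, rfl⟩, le_trans hle (hlat fun t ↦ ?_)⟩
    exact abs_le_abs_of_nonneg (hnonneg f f.2 _) (hfg _)
  have hdir : Directed (· ⊇ ·) K := fun f g ↦
    ⟨⟨c0inf f g, hinf f f.2 g g.2⟩, hmono _ _ fun t ↦ by simp, hmono _ _ fun t ↦ by simp⟩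
  have hKne : ∀ f, (K f).Nonempty := fun f ↦ by
    obtain ⟨φ, hφ, hle⟩ := exists_orbitSup_le_apply_compOp hq h_cpt hG f
    exact ⟨_, ⟨φ, hφ, rfl⟩, (hS f f.2).trans hle⟩
  have := hne.to_subtype
  obtain ⟨R, hR⟩ := IsCompact.nonempty_iInter_of_directed_nonempty_isCompact_isClosed K hdir hKne
    (fun f ↦ h_cpt.inter_right (hclosed f)) fun f ↦ h_cpt.isClosed.inter (hclosed f)
  rw [Set.mem_iInter] at hR
  obtain ⟨f₀, hf₀⟩ := hne
  obtain ⟨ψ, hψ, rfl⟩ := (hR ⟨f₀, hf₀⟩).1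
  exact ⟨ψ, hψ, fun f hf ↦ (hR ⟨f, hf⟩).2⟩

end OrbitSupremum

section WeightedSeminorm

variable {X ι : Type*} [TopologicalSpace X]

lemma summable_weighted_abs_apply {a : ι → ℝ} (ha : Summable a) (ha0 : ∀ i, 0 ≤ a i) (p : ι → X)
    (f : C₀(X, ℝ)) : Summable fun i ↦ a i * |f (p i)| :=
  (ha.mul_right ‖f‖).of_nonneg_of_le (fun i ↦ mul_nonneg (ha0 i) (abs_nonneg _))
    fun i ↦ mul_le_mul_of_nonneg_left (abs_apply_le_norm f (p i)) (ha0 i)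

/-- The seminorm `f ↦ ∑ i, a i * |f (p i)|` on `C₀(X)`, which integrates `|f|` against the atomic
measure with mass `a i` at `p i`. -/
def weightedSeminorm {a : ι → ℝ} (ha : Summable a) (ha0 : ∀ i, 0 ≤ a i) (p : ι → X) :
    Seminorm ℝ C₀(X, ℝ) :=
  Seminorm.of (fun f ↦ ∑' i, a i * |f (p i)|)
    (fun f g ↦ by
      have hf := summable_weighted_abs_apply ha ha0 p f
      have hg := summable_weighted_abs_apply ha ha0 p g
      rw [← hf.tsum_add hg]
      refine (summable_weighted_abs_apply ha ha0 p (f + g)).tsum_le_tsum (fun i ↦ ?_) (hf.add hg)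
      rw [← mul_add]
      exact mul_le_mul_of_nonneg_left (abs_add_le _ _) (ha0 i))
    (fun c f ↦ by
      simp only [ZeroAtInftyContinuousMap.smul_apply, smul_eq_mul, abs_mul, Real.norm_eq_abs,
        mul_left_comm _ |c|, tsum_mul_left])

variable {a : ι → ℝ} (ha : Summable a) (ha0 : ∀ i, 0 ≤ a i) (p : ι → X)

lemma isLatticeSeminorm_weightedSeminorm : IsLatticeSeminorm (weightedSeminorm ha ha0 p) :=
  fun f g hfg ↦ (summable_weighted_abs_apply ha ha0 p f).tsum_le_tsum
    (fun i ↦ mul_le_mul_of_nonneg_left (hfg _) (ha0 i)) (summable_weighted_abs_apply ha ha0 p g)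

variable {p}

lemma weightedSeminorm_le_add {f : C₀(X, ℝ)} {c : ℝ} (hf : ‖f‖ ≤ c) {u : ι → ℝ}
    (hu0 : ∀ i, 0 ≤ u i) (hau : Summable fun i ↦ a i * u i) {s : Finset ι}
    (hfu : ∀ i ∈ s, |f (p i)| ≤ u i) :
    weightedSeminorm ha ha0 p f ≤ (∑' i, a i * u i) + (∑' i, a i - ∑ i ∈ s, a i) * c := by
  classical
  have htail : HasSum (fun i ↦ a i - if i ∈ s then a i else 0) (∑' i, a i - ∑ i ∈ s, a i) := by
    refine ha.hasSum.sub ?_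
    simpa using hasSum_sum_of_ne_finset_zero (f := fun i ↦ if i ∈ s then a i else 0) (s := s)
      fun i hi ↦ if_neg hi
  refine hasSum_le (fun i ↦ ?_) (summable_weighted_abs_apply ha ha0 p f).hasSum
    (hau.hasSum.add (htail.mul_right c))
  by_cases hi : i ∈ s
  · simpa [hi] using mul_le_mul_of_nonneg_left (hfu i hi) (ha0 i)
  · have hfi : a i * |f (p i)| ≤ a i * c :=
      mul_le_mul_of_nonneg_left ((abs_apply_le_norm f _).trans hf) (ha0 i)
    simpa [hi] using hfi.trans (le_add_of_nonneg_left (mul_nonneg (ha0 i) (hu0 i)))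

lemma weightedSeminorm_le_mul_norm (f : C₀(X, ℝ)) :
    weightedSeminorm ha ha0 p f ≤ (∑' i, a i) * ‖f‖ := by
  simpa using weightedSeminorm_le_add ha ha0 (p := p) le_rfl (u := 0) (by simp) (by simp)
    (s := ∅) (f := f) (by simp)

lemma exists_finset_weightedSeminorm_le {ε : ℝ} (hε : 0 < ε) :
    ∃ s : Finset ι, ∀ (p : ι → X) (f : C₀(X, ℝ)), ‖f‖ ≤ 1 → (∀ i ∈ s, f (p i) = 0) →
      weightedSeminorm ha ha0 p f ≤ ε := by
  obtain ⟨s, hs⟩ := (ha.hasSum.eventually (lt_mem_nhds (sub_lt_self _ hε))).exists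
  refine ⟨s, fun p f hf hzero ↦ ?_⟩
  have := weightedSeminorm_le_add ha ha0 (p := p) hf (u := 0) (by simp) (by simp) (s := s)
    (fun i hi ↦ by simp [hzero i hi])
  simp only [Pi.zero_apply, mul_zero, tsum_zero, zero_add, mul_one] at this
  linarith

end WeightedSeminorm

section PeakPoints

variable {X ι : Type*} [TopologicalSpace X]

/-- The larger of the supremum norm and `weightedSeminorm`, the seminorm whose supremum over the
orbits of `G` is the desired norm. -/
def normSupWeighted {a : ι → ℝ} (ha : Summable a) (ha0 : ∀ i, 0 ≤ a i) (p : ι → X) :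
    Seminorm ℝ C₀(X, ℝ) :=
  normSeminorm ℝ C₀(X, ℝ) ⊔ weightedSeminorm ha ha0 p

variable {a : ι → ℝ} (ha : Summable a) (ha0 : ∀ i, 0 ≤ a i) (p : ι → X)

lemma normSupWeighted_apply (f : C₀(X, ℝ)) :
    normSupWeighted ha ha0 p f = max ‖f‖ (weightedSeminorm ha ha0 p f) := rfl

lemma isLatticeSeminorm_normSupWeighted : IsLatticeSeminorm (normSupWeighted ha ha0 p) :=
  isLatticeSeminorm_normSeminorm.sup (isLatticeSeminorm_weightedSeminorm ha ha0 p)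

lemma normSupWeighted_le_mul_norm (f : C₀(X, ℝ)) :
    normSupWeighted ha ha0 p f ≤ max 1 (∑' i, a i) * ‖f‖ := by
  rw [normSupWeighted_apply, max_mul_of_nonneg _ _ (norm_nonneg f), one_mul]
  exact max_le_max le_rfl (weightedSeminorm_le_mul_norm ha ha0 f)

variable {G : Set (X ≃ₜ X)}

lemma norm_le_orbitSup_normSupWeighted (h_id : Homeomorph.refl X ∈ G) (f : C₀(X, ℝ)) :
    ‖f‖ ≤ orbitSup G (normSupWeighted ha ha0 p) f :=
  (le_max_left _ _).trans (le_orbitSup (normSupWeighted_le_mul_norm ha ha0 p) h_id f)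

variable [T2Space X] [LocallyCompactSpace X] (hG : G.Nonempty) {p}
include hG

lemma exists_apply_eq_one_of_notMem_closure_orbit {s : X}
    (hs : ∀ i, s ∉ closure {z | ∃ φ ∈ G, φ (p i) = z}) :
    ∃ x : C₀(X, ℝ), x s = 1 ∧ orbitSup G (normSupWeighted ha ha0 p) x ≤ 1 := by
  obtain ⟨F, hF⟩ := exists_finset_weightedSeminorm_le (X := X) ha ha0 one_pos
  have hclosed : IsClosed (⋃ i ∈ F, closure {z | ∃ φ ∈ G, φ (p i) = z}) :=
    isClosed_biUnion_finset fun i _ ↦ isClosed_closure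
  obtain ⟨x, hone, hzero, hIcc⟩ := exists_apply_eq_one_of_notMem hclosed (s := s) (by simp [hs])
  have hx : ‖x‖ ≤ 1 := norm_le_of_forall_abs_le zero_le_one fun t ↦ by
    rw [abs_of_nonneg (hIcc t).1]
    exact (hIcc t).2
  refine ⟨x, hone, orbitSup_le (normSupWeighted_le_mul_norm ha ha0 p) hG fun φ hφ ↦ ?_⟩
  refine max_le ((norm_compOp φ x).trans_le hx)
    (hF p _ ((norm_compOp φ x).trans_le hx) fun i hi ↦ hzero _ ?_)
  exact Set.mem_biUnion (t := fun i ↦ closure _) hi (subset_closure ⟨φ, hφ, rfl⟩)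

theorem dense_setOf_apply_eq_one_orbitSup_le_one [Countable ι]
    (h_nd : ∀ t : X, IsNowhereDense {z : X | ∃ φ ∈ G, φ t = z}) :
    Dense {s | ∃ x : C₀(X, ℝ), x s = 1 ∧ orbitSup G (normSupWeighted ha ha0 p) x ≤ 1} := by
  have hdense : Dense (⋂ i, (closure {z : X | ∃ φ ∈ G, φ (p i) = z})ᶜ) :=
    dense_iInter_of_isOpen (fun i ↦ isClosed_closure.isOpen_compl)
      fun i ↦ interior_eq_empty_iff_dense_compl.1 (h_nd (p i))
  refine hdense.mono fun s hs ↦ exists_apply_eq_one_of_notMem_closure_orbit ha ha0 hG fun i ↦ ?_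
  exact Set.mem_iInter.1 hs i

end PeakPoints

section Domination

variable {X ι : Type*} [TopologicalSpace X] {a : ι → ℝ} {c : ℝ} {q : ι → X}

/-- The nonnegative functions of norm at most `c` which are at least `a i` at each point `q i`, a
downward directed family decreasing to the function equal to `a i` at `q i` and `0` elsewhere. -/
def dominating (a : ι → ℝ) (q : ι → X) (c : ℝ) : Set C₀(X, ℝ) :=
  {f | (∀ t, 0 ≤ f t) ∧ ‖f‖ ≤ c ∧ ∀ i, a i ≤ f (q i)}

lemma c0inf_mem_dominating {f g : C₀(X, ℝ)} (hf : f ∈ dominating a q c)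
    (hg : g ∈ dominating a q c) : c0inf f g ∈ dominating a q c := by
  obtain ⟨hf0, hfc, hfa⟩ := hf
  obtain ⟨hg0, -, hga⟩ := hg
  refine ⟨fun t ↦ ?_, le_trans ?_ hfc, fun i ↦ ?_⟩
  · simpa using ⟨hf0 t, hg0 t⟩
  · refine norm_le_of_forall_abs_le (norm_nonneg f) fun t ↦ ?_
    rw [c0inf_apply, abs_of_nonneg (le_min (hf0 t) (hg0 t))]
    exact (min_le_left _ _).trans ((le_abs_self _).trans (abs_apply_le_norm f t))
  · simpa using ⟨hfa i, hga i⟩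

lemma tsum_sq_le_weightedSeminorm (ha : Summable a) (ha0 : ∀ i, 0 ≤ a i)
    (ha_sq : Summable fun i ↦ a i ^ 2) {f : C₀(X, ℝ)} (hf : ∀ i, a i ≤ f (q i)) :
    ∑' i, a i ^ 2 ≤ weightedSeminorm ha ha0 q f := by
  refine ha_sq.tsum_le_tsum (fun i ↦ ?_) (summable_weighted_abs_apply ha ha0 q f)
  rw [sq]
  exact mul_le_mul_of_nonneg_left ((hf i).trans (le_abs_self _)) (ha0 i)

variable [T2Space X] [LocallyCompactSpace X]

lemma exists_mem_dominating_eqOn (ha0 : ∀ i, 0 ≤ a i) (ha : HasSum a c)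
    (hq : Function.Injective q) (F : Finset X) :
    ∃ f ∈ dominating a q c, Set.EqOn f (Function.extend q a 0) F := by
  have hbump : ∀ i, ∃ g : C₀(X, ℝ), g (q i) = 1 ∧ (∀ t ∈ (F : Set X) \ {q i}, g t = 0) ∧
      ∀ t, g t ∈ Set.Icc 0 1 := fun i ↦
    exists_apply_eq_one_of_notMem (F.finite_toSet.sdiff (t := {q i})).isClosed (by simp)
  choose g hone hzero hIcc using hbump
  have hterm_nonneg : ∀ i t, 0 ≤ a i * g i t := fun i t ↦ mul_nonneg (ha0 i) (hIcc i t).1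
  have hsummable : Summable fun i ↦ a i • g i :=
    ha.summable.of_norm_bounded fun i ↦ norm_le_of_forall_abs_le (ha0 i) fun t ↦ by
      simpa [abs_of_nonneg, ha0 i, (hIcc i t).1] using
        mul_le_of_le_one_right (ha0 i) (hIcc i t).2
  obtain ⟨f, hf⟩ := hsummable
  have hsum : ∀ t, HasSum (fun i ↦ a i * g i t) (f t) := fun t ↦ hf.mapL (evalC0 t)
  have hf_nonneg : ∀ t, 0 ≤ f t := fun t ↦ (hsum t).nonneg fun i ↦ hterm_nonneg i t
  refine ⟨f, ⟨hf_nonneg, norm_le_of_forall_abs_le (ha.nonneg ha0) fun t ↦ ?_, fun i ↦ ?_⟩,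
    fun x hx ↦ ?_⟩
  · rw [abs_of_nonneg (hf_nonneg t)]
    exact hasSum_le (fun i ↦ mul_le_of_le_one_right (ha0 i) (hIcc i t).2) (hsum t) ha
  · simpa [hone] using le_hasSum (hsum (q i)) i fun j _ ↦ hterm_nonneg j _
  · have hoff : ∀ i, x ≠ q i → a i * g i x = 0 := fun i hi ↦ by
      rw [hzero i x ⟨hx, hi⟩, mul_zero]
    by_cases hxq : ∃ i, q i = x
    · obtain ⟨i, rfl⟩ := hxq
      rw [hq.extend_apply, (hsum _).unique (hasSum_single i fun j hj ↦ hoff j (hq.ne hj.symm)),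
        hone, mul_one]
    · have hterms : (fun i ↦ a i * g i x) = 0 := funext fun i ↦ hoff i fun h ↦ hxq ⟨i, h.symm⟩
      rw [Function.extend_apply' _ _ _ hxq]
      exact (hsum x).unique (hterms ▸ hasSum_zero)

theorem le_tsum_mul_extend_of_dominating (ha : Summable a) (ha0 : ∀ i, 0 ≤ a i)
    (hq : Function.Injective q) {p : ι → X} {S : ℝ}
    (hS : ∀ f ∈ dominating a q (∑' i, a i), S ≤ weightedSeminorm ha ha0 p f) :
    S ≤ ∑' i, a i * Function.extend q a 0 (p i) := by
  classical
  have hbound : ∀ s : Finset ι, S ≤ ∑' i, a i * Function.extend q a 0 (p i) +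
      (∑' i, a i - ∑ i ∈ s, a i) * ∑' i, a i := fun s ↦ by
    obtain ⟨f, hf, hfF⟩ := exists_mem_dominating_eqOn ha0 ha.hasSum hq (s.image p)
    refine (hS f hf).trans (weightedSeminorm_le_add ha ha0 hf.2.1
      (fun i ↦ (extend_zero_mem_Icc ha0 ha.hasSum hq _).1) (summable_mul_extend_zero ha0 ha hq p)
      fun i hi ↦ ?_)
    rw [abs_of_nonneg (hf.1 _), hfF (by simpa using ⟨i, hi, rfl⟩)]
  have hlim : Tendsto (fun s : Finset ι ↦ ∑' i, a i * Function.extend q a 0 (p i) +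
      (∑' i, a i - ∑ i ∈ s, a i) * ∑' i, a i) atTop
      (𝓝 (∑' i, a i * Function.extend q a 0 (p i))) := by
    have hsum : Tendsto (fun s ↦ ∑ i ∈ s, a i) atTop (𝓝 (∑' i, a i)) := ha.hasSum
    simpa only [sub_self, zero_mul, add_zero] using
      ((hsum.const_sub (∑' i, a i)).mul_const (∑' i, a i)).const_add
        (∑' i, a i * Function.extend q a 0 (p i))
  exact ge_of_tendsto' hlim hbound

theorem exists_forall_apply_eq_of_isometry
    (ha : Summable a) (ha0 : ∀ i, 0 < a i) (ha_inj : Function.Injective a)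
    (ha_sq : Summable fun i ↦ a i ^ 2) (hlt : ∑' i, a i < ∑' i, a i ^ 2)
    {p : ι → X} (hp : Function.Injective p) {G : Set (X ≃ₜ X)} (h_id : Homeomorph.refl X ∈ G)
    (h_cpt : IsCompact ((fun φ : X ≃ₜ X ↦ (compOp φ : C₀(X, ℝ) → C₀(X, ℝ))) '' G)) {σ : X ≃ₜ X}
    (hσ : ∀ f, orbitSup G (normSupWeighted ha (fun i ↦ (ha0 i).le) p) (compOp σ f) =
      orbitSup G (normSupWeighted ha (fun i ↦ (ha0 i).le) p) f) :
    ∃ ψ ∈ G, ∀ i, ψ (p i) = σ (p i) := by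
  have ha0' : ∀ i, 0 ≤ a i := fun i ↦ (ha0 i).le
  have hbound := normSupWeighted_le_mul_norm ha ha0' p
  have hσp : Function.Injective (σ ∘ p) := σ.injective.comp hp
  have hlarge : ∀ f ∈ dominating a (σ ∘ p) (∑' i, a i),
      ∑' i, a i ^ 2 ≤ orbitSup G (normSupWeighted ha ha0' p) f := fun f hf ↦ calc
    ∑' i, a i ^ 2 ≤ weightedSeminorm ha ha0' p (compOp σ f) :=
      tsum_sq_le_weightedSeminorm ha ha0' ha_sq hf.2.2
    _ ≤ normSupWeighted ha ha0' p (compOp σ f) := le_max_right _ _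
    _ ≤ orbitSup G (normSupWeighted ha ha0' p) (compOp σ f) := le_orbitSup hbound h_id _
    _ = orbitSup G (normSupWeighted ha ha0' p) f := hσ f
  obtain ⟨f₀, hf₀, -⟩ := exists_mem_dominating_eqOn ha0' ha.hasSum hσp ∅
  obtain ⟨ψ, hψ, hattained⟩ := exists_forall_le_apply_compOp hbound h_cpt
    (isLatticeSeminorm_normSupWeighted ha ha0' p) ⟨_, h_id⟩ ⟨f₀, hf₀⟩ (fun f hf ↦ hf.1)
    (fun f hf g hg ↦ c0inf_mem_dominating hf hg) hlarge
  have hinner : ∑' i, a i ^ 2 ≤ ∑' i, a i * Function.extend (σ ∘ p) a 0 (ψ (p i)) := by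
    refine le_tsum_mul_extend_of_dominating (p := ψ ∘ p) ha ha0' hσp fun f hf ↦ ?_
    refine (le_max_iff.1 (hattained f hf)).resolve_left (not_le.2 ?_)
    exact ((norm_compOp ψ f).trans_le hf.2.1).trans_lt hlt
  refine ⟨ψ, hψ, fun i ↦ ?_⟩
  have hi := extend_zero_apply_eq_of_tsum_sq_le_tsum_mul ha0' ha ha_sq hσp
    (ψ.injective.comp hp) hinner i
  exact eq_of_extend_zero_apply_eq ha_inj hσp (ha0 i).ne' hi

end Domination

section Isometries

variable {X ι : Type*} [TopologicalSpace X] [T2Space X] [LocallyCompactSpace X] [Countable ι]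
  {a : ι → ℝ} {p : ι → X} {G : Set (X ≃ₜ X)}

theorem exists_mem_eq_compOp_of_isometry
    (ha : Summable a) (ha0 : ∀ i, 0 < a i) (ha_inj : Function.Injective a)
    (ha_sq : Summable fun i ↦ a i ^ 2) (hlt : ∑' i, a i < ∑' i, a i ^ 2)
    (hp : Function.Injective p) (hp_dense : DenseRange p) (h_id : Homeomorph.refl X ∈ G)
    (h_cpt : IsCompact ((fun φ : X ≃ₜ X ↦ (compOp φ : C₀(X, ℝ) → C₀(X, ℝ))) '' G))
    (h_nd : ∀ t : X, IsNowhereDense {z : X | ∃ φ ∈ G, φ t = z})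
    {T : C₀(X, ℝ) ≃L[ℝ] C₀(X, ℝ)} (hT : ∀ f g : C₀(X, ℝ), T (c0sup f g) = c0sup (T f) (T g))
    (hTN : ∀ x, orbitSup G (normSupWeighted ha (fun i ↦ (ha0 i).le) p) (T x) =
      orbitSup G (normSupWeighted ha (fun i ↦ (ha0 i).le) p) x) :
    ∃ φ ∈ G, ∀ f, T f = compOp φ f := by
  obtain ⟨σ, hσ⟩ := exists_eq_compOp_of_isometry (norm_le_orbitSup_normSupWeighted ha _ p h_id)
    (dense_setOf_apply_eq_one_orbitSup_le_one ha _ ⟨_, h_id⟩ h_nd) hT hTN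
  obtain ⟨ψ, hψ, hψσ⟩ := exists_forall_apply_eq_of_isometry ha ha0 ha_inj ha_sq hlt hp h_id h_cpt
    fun f ↦ by rw [← hσ, hTN]
  have hψ_eq : ψ = σ := DFunLike.coe_injective <|
    hp_dense.equalizer ψ.continuous σ.continuous (funext hψσ)
  exact ⟨ψ, hψ, hψ_eq ▸ hσ⟩

end Isometries

theorem stmt12_general {X : Type*} [TopologicalSpace X] [T2Space X] [LocallyCompactSpace X]
    [TopologicalSpace.SeparableSpace X]
    (G : Set (X ≃ₜ X)) (h_id : Homeomorph.refl X ∈ G)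
    (h_comp : ∀ φ ∈ G, ∀ ψ ∈ G, φ.trans ψ ∈ G) (h_inv : ∀ φ ∈ G, φ.symm ∈ G)
    (h_cpt : IsCompact
      ((fun φ : X ≃ₜ X => (compOp φ : C₀(X, ℝ) → C₀(X, ℝ))) '' G))
    (h_nd : ∀ t : X, IsNowhereDense {z : X | ∃ φ ∈ G, φ t = z}) :
    ∀ C : ℝ, 1 < C → ∃ N : C₀(X, ℝ) → ℝ,
      (∀ x y : C₀(X, ℝ), N (x + y) ≤ N x + N y) ∧
      (∀ (c : ℝ) (x : C₀(X, ℝ)), N (c • x) = |c| * N x) ∧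
      (∀ x y : C₀(X, ℝ), (∀ t, |x t| ≤ |y t|) → N x ≤ N y) ∧
      (∀ x : C₀(X, ℝ), ‖x‖ ≤ N x ∧ N x ≤ C * ‖x‖) ∧
      (∀ φ ∈ G, ∀ x : C₀(X, ℝ), N (compOp φ x) = N x) ∧
      (∀ T : C₀(X, ℝ) ≃L[ℝ] C₀(X, ℝ),
        (∀ f g : C₀(X, ℝ), T (c0sup f g) = c0sup (T f) (T g)) →
        (∀ x : C₀(X, ℝ), N (T x) = N x) →
        ∃ φ ∈ G, ∀ f : C₀(X, ℝ), T f = compOp φ f) := by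
  intro C hC
  rcases isEmpty_or_nonempty X with _ | ⟨⟨t⟩⟩
  · have hzero : ∀ x : C₀(X, ℝ), x = 0 := fun x ↦ ZeroAtInftyContinuousMap.eq_of_empty x 0
    exact ⟨norm, norm_add_le, norm_smul, fun x y _ ↦ by rw [hzero x, hzero y],
      fun x ↦ by simp [hzero x], fun φ _ x ↦ norm_compOp φ x,
      fun T _ _ ↦ ⟨_, h_id, fun f ↦ ZeroAtInftyContinuousMap.eq_of_empty _ _⟩⟩
  have := infinite_of_isNowhereDense (h_nd t) ⟨t, _, h_id, rfl⟩
  obtain ⟨p, hp, hp_dense⟩ := exists_injective_denseRange X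
  obtain ⟨a, ha0, ha_inj, haC, ha_sq, hlt⟩ := exists_weights hC
  have ha0' := fun i ↦ (ha0 i).le
  have hq := normSupWeighted_le_mul_norm haC.summable ha0' p
  rw [haC.tsum_eq, max_eq_right hC.le] at hq
  exact ⟨orbitSup G (normSupWeighted haC.summable ha0' p), map_add_le_add _, map_smul_eq_mul _,
    (isLatticeSeminorm_normSupWeighted haC.summable ha0' p).orbitSup hq ⟨_, h_id⟩,
    fun x ↦ ⟨norm_le_orbitSup_normSupWeighted haC.summable ha0' p h_id x,
      orbitSup_le_mul_norm hq ⟨_, h_id⟩ x⟩,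
    fun φ hφ x ↦ orbitSup_compOp hq h_comp h_inv hφ x,
    fun T ↦ exists_mem_eq_compOp_of_isometry haC.summable ha0 ha_inj ha_sq
      (haC.tsum_eq.trans_lt hlt) hp hp_dense h_id h_cpt h_nd⟩

/-- **Proposition 5.1.** Let `X` be a locally compact Polish space and `G` a group of
homeomorphisms of `X` such that the set of composition operators `{C_φ : φ ∈ G}` is
SOT-compact (compact in the topology of pointwise norm convergence) and all orbits are
nowhere dense. Then for every `C > 1` there is an equivalent lattice norm `N` on `C₀(X)`,
with `‖·‖ ≤ N ≤ C‖·‖`, invariant under `G`, whose lattice isometries are exactly the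
composition operators coming from `G`. -/
theorem stmt12 {X : Type*} [TopologicalSpace X] [PolishSpace X] [LocallyCompactSpace X]
    (G : Set (X ≃ₜ X)) (h_id : Homeomorph.refl X ∈ G)
    (h_comp : ∀ φ ∈ G, ∀ ψ ∈ G, φ.trans ψ ∈ G) (h_inv : ∀ φ ∈ G, φ.symm ∈ G)
    (h_cpt : IsCompact
      ((fun φ : X ≃ₜ X => (compOp φ : C₀(X, ℝ) → C₀(X, ℝ))) '' G))
    (h_nd : ∀ t : X, IsNowhereDense {z : X | ∃ φ ∈ G, φ t = z}) :
    ∀ C : ℝ, 1 < C → ∃ N : C₀(X, ℝ) → ℝ,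
      (∀ x y : C₀(X, ℝ), N (x + y) ≤ N x + N y) ∧
      (∀ (c : ℝ) (x : C₀(X, ℝ)), N (c • x) = |c| * N x) ∧
      (∀ x y : C₀(X, ℝ), (∀ t, |x t| ≤ |y t|) → N x ≤ N y) ∧
      (∀ x : C₀(X, ℝ), ‖x‖ ≤ N x ∧ N x ≤ C * ‖x‖) ∧
      (∀ φ ∈ G, ∀ x : C₀(X, ℝ), N (compOp φ x) = N x) ∧
      (∀ T : C₀(X, ℝ) ≃L[ℝ] C₀(X, ℝ),
        (∀ f g : C₀(X, ℝ), T (c0sup f g) = c0sup (T f) (T g)) →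
        (∀ x : C₀(X, ℝ), N (T x) = N x) →
        ∃ φ ∈ G, ∀ f : C₀(X, ℝ), T f = compOp φ f) :=
  stmt12_general G h_id h_comp h_inv h_cpt h_nd

end
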